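/- Let s ∈ (0,1) and β ∈ (0,2s) with β−s ∉ ℤ and β−2s ∉ ℤ. Then the principal value p.v.∫₀^∞ (1 − y^β)/|1−y|^{1+2s} dy (i.e., the regional fractional Laplacian of x ↦ x^β on ℝ₊, evaluated at x = 1, divided by c_{1,s}) equals 0 if and only if β satisfies equation (E): Γ(β+1)·Γ(2s−β)·sin(π(β−s)) = −Γ(2s)·sin(πs), equivalently Γ(β+1)/(Γ(β−2s+1)Γ(2s)) = sin(π(β−2s))·sin(πs)/(π·sin(π(β−s))). -/

import Mathlib

open MeasureTheory Real Set Filter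

noncomputable section

/-!
The substitution `y ↦ y⁻¹` folds `(1, ∞)` onto `(0, 1)`: the two halves of the principal value add
up to the absolutely convergent integral of `(1 - x ^ a) * (1 - x ^ b) * (1 - x) ^ (-(2 + a + b))`
over `(0, 1)`, where `a = β` and `b = 2s - 1 - β`. The truncation `|y - 1| > ε` is not invariant
under inversion, but the mismatch has length `O(ε ^ 2)` and does not contribute in the limit. Two
integrations by parts remove the singularity at `1` and leave beta integrals, and the reflection
formula for `Γ` turns the result into
`(1 + a + b) I(a, b) = Γ(a + 1) Γ(b + 1) cos(π(a - b)/2) / (Γ(a + b + 1) cos(π(a + b)/2)) - 1`.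
The second integration by parts requires `a + b ≠ 0`; the case `a + b = 0`, that is `s = 1/2`,
follows by continuity in `b`.
-/

open scoped Topology

section BetaIntegral

variable {p q t x a b C : ℝ} {g g' : ℝ → ℝ}

theorem abs_one_sub_rpow_le (hx0 : 0 < x) (hx1 : x ≤ 1) (a : ℝ) :
    |1 - x ^ a| ≤ max |a| 1 * (x ^ min a 0 * (1 - x)) := by
  have bernoulli : 1 - x ^ |a| ≤ max |a| 1 * (1 - x) := by
    have hB := one_add_mul_self_le_rpow_one_add (by linarith : -1 ≤ x - 1) (le_max_right |a| 1)
    have hmono := rpow_le_rpow_of_exponent_ge hx0 hx1 (le_max_left |a| 1)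
    rw [add_sub_cancel] at hB
    linarith
  rcases le_total 0 a with ha | ha
  · rw [abs_of_nonneg ha] at bernoulli ⊢
    rwa [abs_of_nonneg (sub_nonneg.2 (rpow_le_one hx0.le hx1 ha)), min_eq_right ha, rpow_zero,
      one_mul]
  · have hfactor : |1 - x ^ a| = x ^ a * (1 - x ^ |a|) := by
      rw [abs_of_nonpos (sub_nonpos.2 (one_le_rpow_of_pos_of_le_one_of_nonpos hx0 hx1 ha)),
        abs_of_nonpos ha, mul_sub, ← rpow_add hx0, add_neg_cancel, rpow_zero]
      ring
    rw [hfactor, min_eq_left ha, mul_left_comm]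
    gcongr

theorem intervalIntegrable_rpow_mul_one_sub_rpow (hp : -1 < p) (hq : -1 < q) :
    IntervalIntegrable (fun x : ℝ => x ^ p * (1 - x) ^ q) volume 0 1 := by
  have hconv := Complex.betaIntegral_convergent (u := p + 1) (v := q + 1)
    (by simpa using by linarith) (by simpa using by linarith)
  rw [intervalIntegrable_iff_integrableOn_Ioc_of_le zero_le_one] at hconv ⊢
  refine IntegrableOn.congr_fun (f := fun x : ℝ => RCLike.re _) hconv.re (fun x hx => ?_)
    measurableSet_Ioc
  have hx1 : 0 ≤ 1 - x := sub_nonneg.2 hx.2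
  simp only [add_sub_cancel_right]
  rw [← Complex.ofReal_one, ← Complex.ofReal_sub, ← Complex.ofReal_cpow hx.1.le,
    ← Complex.ofReal_cpow hx1, ← Complex.ofReal_mul, RCLike.re_to_complex, Complex.ofReal_re]

theorem integral_rpow_mul_one_sub_rpow (hp : -1 < p) (hq : -1 < q) :
    ∫ x in (0 : ℝ)..1, x ^ p * (1 - x) ^ q = Gamma (p + 1) * Gamma (q + 1) / Gamma (p + q + 2) := by
  have hbeta : ((∫ x in (0 : ℝ)..1, x ^ p * (1 - x) ^ q : ℝ) : ℂ) =
      Complex.betaIntegral ((p + 1 : ℝ) : ℂ) ((q + 1 : ℝ) : ℂ) := by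
    rw [Complex.betaIntegral, ← intervalIntegral.integral_ofReal]
    refine intervalIntegral.integral_congr fun x hx => ?_
    rw [uIcc_of_le zero_le_one] at hx
    simp only [Complex.ofReal_add, Complex.ofReal_one, add_sub_cancel_right]
    rw [Complex.ofReal_mul, Complex.ofReal_cpow hx.1, Complex.ofReal_cpow (sub_nonneg.2 hx.2),
      Complex.ofReal_sub, Complex.ofReal_one]
  rw [← Complex.ofReal_re (∫ x in (0 : ℝ)..1, _), hbeta,
    ← ProbabilityTheory.beta_eq_betaIntegralReal _ _ (by linarith) (by linarith),
    ProbabilityTheory.beta]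
  ring_nf

theorem inv_Gamma_eq_mul_inv_Gamma_add_one (x : ℝ) :
    (Gamma x)⁻¹ = x * (Gamma (x + 1))⁻¹ := by
  have h := Complex.one_div_Gamma_eq_self_mul_one_div_Gamma_add_one x
  rw [← Complex.ofReal_one, ← Complex.ofReal_add, Complex.Gamma_ofReal, Complex.Gamma_ofReal] at h
  exact_mod_cast h

theorem add_add_one_mul_integral_rpow_mul_one_sub_rpow (hp : -1 < p) (hq : -1 < q) :
    (p + q + 1) * ∫ x in (0 : ℝ)..1, x ^ p * (1 - x) ^ q =
      Gamma (p + 1) * Gamma (q + 1) / Gamma (p + q + 1) := by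
  rw [integral_rpow_mul_one_sub_rpow hp hq, div_eq_mul_inv _ (Gamma (p + q + 1)),
    inv_Gamma_eq_mul_inv_Gamma_add_one, add_assoc (p + q) 1 1, one_add_one_eq_two]
  ring

theorem abs_mul_one_sub_rpow_le {y : ℝ} (hx : x < 1)
    (hy : |y| ≤ C * (x ^ p * (1 - x) ^ q)) (t : ℝ) :
    |y * (1 - x) ^ t| ≤ C * (x ^ p * (1 - x) ^ (q + t)) := by
  have hx1 : 0 < 1 - x := sub_pos.2 hx
  rw [abs_mul, abs_of_pos (rpow_pos_of_pos hx1 _), rpow_add hx1, ← mul_assoc, ← mul_assoc]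
  gcongr
  rwa [mul_assoc]

theorem continuousOn_one_sub_rpow (q : ℝ) : ContinuousOn (fun x : ℝ => (1 - x) ^ q) (Iio 1) :=
  ContinuousOn.rpow_const (by fun_prop) fun _ hx => Or.inl (sub_pos.2 hx).ne'

theorem intervalIntegrable_mul_one_sub_rpow (hp : -1 < p) (hqt : -1 < q + t)
    (hg : ContinuousOn g (Ioo 0 1))
    (hbound : ∀ x ∈ Ioo (0 : ℝ) 1, |g x| ≤ C * (x ^ p * (1 - x) ^ q)) :
    IntervalIntegrable (fun x => g x * (1 - x) ^ t) volume 0 1 := by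
  have hdom := (intervalIntegrable_rpow_mul_one_sub_rpow hp hqt).const_mul C
  have hcont := hg.mul ((continuousOn_one_sub_rpow t).mono Ioo_subset_Iio_self)
  rw [intervalIntegrable_iff_integrableOn_Ioo_of_le zero_le_one] at hdom ⊢
  refine hdom.mono' (hcont.aestronglyMeasurable measurableSet_Ioo) ?_
  filter_upwards [ae_restrict_mem measurableSet_Ioo] with x hx
  exact abs_mul_one_sub_rpow_le hx.2 (hbound x hx) t

theorem tendsto_zero_of_abs_le_rpow_mul_one_sub_rpow (hp : 0 < p) (hq : 0 < q)
    (hbound : ∀ x ∈ Ioo (0 : ℝ) 1, |g x| ≤ C * (x ^ p * (1 - x) ^ q)) :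
    Tendsto g (𝓝[>] 0) (𝓝 0) ∧ Tendsto g (𝓝[<] 1) (𝓝 0) := by
  have hcont : Continuous fun x : ℝ => C * (x ^ p * (1 - x) ^ q) :=
    continuous_const.mul ((continuous_id.rpow_const fun _ => Or.inr hp.le).mul
      ((continuous_const.sub continuous_id).rpow_const fun _ => Or.inr hq.le))
  have hzero := hcont.tendsto 0
  have hone := hcont.tendsto 1
  simp only [zero_rpow hp.ne', zero_mul, mul_zero, sub_self, zero_rpow hq.ne'] at hzero hone
  constructor
  · refine squeeze_zero_norm' ?_ (hzero.mono_left nhdsWithin_le_nhds)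
    filter_upwards [Ioo_mem_nhdsGT one_pos] with x hx using hbound x hx
  · refine squeeze_zero_norm' ?_ (hone.mono_left nhdsWithin_le_nhds)
    filter_upwards [Ioo_mem_nhdsLT one_pos] with x hx using hbound x hx

/-- Integrate the derivative of `x * g x * (1 - x) ^ t`, whose boundary values vanish. -/
theorem mul_integral_mul_one_sub_rpow_sub_one (hp : -1 < p) (hqt : 0 < q + t)
    (hg : ∀ x ∈ Ioo (0 : ℝ) 1, HasDerivAt g (g' x) x)
    (hbound : ∀ x ∈ Ioo (0 : ℝ) 1, |g x| ≤ C * (x ^ p * (1 - x) ^ q))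
    (hint : IntervalIntegrable (fun x => ((1 + t) * g x + x * g' x) * (1 - x) ^ t) volume 0 1) :
    t * ∫ x in (0 : ℝ)..1, g x * (1 - x) ^ (t - 1) =
      ∫ x in (0 : ℝ)..1, ((1 + t) * g x + x * g' x) * (1 - x) ^ t := by
  have hgint : IntervalIntegrable (fun x => g x * (1 - x) ^ (t - 1)) volume 0 1 :=
    intervalIntegrable_mul_one_sub_rpow hp (by linarith) (HasDerivAt.continuousOn hg) hbound
  have hboundary := tendsto_zero_of_abs_le_rpow_mul_one_sub_rpow (C := C)
    (g := fun x => x * g x * (1 - x) ^ t) (by linarith : 0 < p + 1) hqt fun x hx => by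
      refine abs_mul_one_sub_rpow_le hx.2 ?_ t
      rw [abs_mul, abs_of_pos hx.1, rpow_add_one hx.1.ne']
      calc x * |g x| ≤ x * (C * (x ^ p * (1 - x) ^ q)) :=
            mul_le_mul_of_nonneg_left (hbound x hx) hx.1.le
        _ = C * (x ^ p * x * (1 - x) ^ q) := by ring
  have hderiv : ∀ x ∈ Ioo (0 : ℝ) 1, HasDerivAt (fun x => x * g x * (1 - x) ^ t)
      (((1 + t) * g x + x * g' x) * (1 - x) ^ t - t * (g x * (1 - x) ^ (t - 1))) x := by
    intro x hx
    have hx1 : 1 - x ≠ 0 := (sub_pos.2 hx.2).ne'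
    have hsplit : (1 - x) ^ t = (1 - x) ^ (t - 1) * (1 - x) := by
      rw [← rpow_add_one hx1, sub_add_cancel]
    refine (((hasDerivAt_id' x).fun_mul (hg x hx)).fun_mul
      (((hasDerivAt_id' x).const_sub 1).rpow_const (p := t) (Or.inl hx1))).congr_deriv ?_
    rw [hsplit]
    ring
  have hftc := intervalIntegral.integral_eq_sub_of_hasDerivAt_of_tendsto zero_lt_one hderiv
    (hint.sub (hgint.const_mul t)) hboundary.1 hboundary.2
  rw [intervalIntegral.integral_sub hint (hgint.const_mul t),
    intervalIntegral.integral_const_mul] at hftc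
  linarith

theorem hasDerivAt_one_sub_rpow_const (hx : 0 < x) (a : ℝ) :
    HasDerivAt (fun x : ℝ => 1 - x ^ a) (-(a * x ^ (a - 1))) x :=
  (hasDerivAt_rpow_const (Or.inl hx.ne')).const_sub 1

theorem abs_one_sub_rpow_le_mul_one_sub_rpow_one (hx : x ∈ Ioo (0 : ℝ) 1) (a : ℝ) :
    |1 - x ^ a| ≤ max |a| 1 * (x ^ min a 0 * (1 - x) ^ (1 : ℝ)) := by
  rw [rpow_one]
  exact abs_one_sub_rpow_le hx.1 hx.2.le a

theorem abs_one_sub_rpow_mul_one_sub_rpow_le (hx : x ∈ Ioo (0 : ℝ) 1) (a b : ℝ) :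
    |(1 - x ^ a) * (1 - x ^ b)| ≤
      max |a| 1 * max |b| 1 * (x ^ (min a 0 + min b 0) * (1 - x) ^ (2 : ℝ)) := by
  have hx1 : 0 ≤ 1 - x := sub_nonneg.2 hx.2.le
  rw [abs_mul, rpow_add hx.1, rpow_two]
  calc |1 - x ^ a| * |1 - x ^ b|
      ≤ max |a| 1 * (x ^ min a 0 * (1 - x)) * (max |b| 1 * (x ^ min b 0 * (1 - x))) :=
        mul_le_mul (abs_one_sub_rpow_le hx.1 hx.2.le a) (abs_one_sub_rpow_le hx.1 hx.2.le b)
          (abs_nonneg _) (mul_nonneg (by positivity) (mul_nonneg (rpow_nonneg hx.1.le _) hx1))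
    _ = max |a| 1 * max |b| 1 * (x ^ min a 0 * x ^ min b 0 * (1 - x) ^ 2) := by ring

theorem intervalIntegrable_one_sub_rpow_mul_one_sub_rpow (ha : -1 < a) (ht : -2 < t) :
    IntervalIntegrable (fun x : ℝ => (1 - x ^ a) * (1 - x) ^ t) volume 0 1 :=
  intervalIntegrable_mul_one_sub_rpow (lt_min ha (by norm_num)) (by linarith)
    (HasDerivAt.continuousOn fun _ hx => hasDerivAt_one_sub_rpow_const hx.1 a)
    fun _ hx => abs_one_sub_rpow_le_mul_one_sub_rpow_one hx a

theorem mul_integral_one_sub_rpow_mul_one_sub_rpow (ha : -1 < a) (ht : -1 < t) :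
    t * ∫ x in (0 : ℝ)..1, (1 - x ^ a) * (1 - x) ^ (t - 1) =
      1 - Gamma (a + 1) * Gamma (t + 1) / Gamma (a + t + 1) := by
  have hpow (p : ℝ) (hp : -1 < p) := intervalIntegrable_rpow_mul_one_sub_rpow hp ht
  have hbeta (p : ℝ) (hp : -1 < p) := add_add_one_mul_integral_rpow_mul_one_sub_rpow hp ht
  have hzero : (-1 : ℝ) < 0 := by norm_num
  have hintegrand : EqOn
      (fun x : ℝ => (0 + t + 1) * (x ^ (0 : ℝ) * (1 - x) ^ t) - (a + t + 1) * (x ^ a * (1 - x) ^ t))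
      (fun x => ((1 + t) * (1 - x ^ a) + x * -(a * x ^ (a - 1))) * (1 - x) ^ t) (uIoo 0 1) := by
    rw [uIoo_of_le zero_le_one]
    intro x hx
    simp only [rpow_zero, rpow_sub_one hx.1.ne']
    field_simp [hx.1.ne']
    ring
  have hint := ((hpow 0 hzero).const_mul (0 + t + 1)).sub ((hpow a ha).const_mul (a + t + 1))
  rw [mul_integral_mul_one_sub_rpow_sub_one (lt_min ha hzero) (by linarith : 0 < 1 + t)
      (fun x hx => hasDerivAt_one_sub_rpow_const hx.1 a)
      (fun x hx => abs_one_sub_rpow_le_mul_one_sub_rpow_one hx a) (hint.congr_uIoo hintegrand),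
    ← intervalIntegral.integral_congr_uIoo hintegrand,
    intervalIntegral.integral_sub ((hpow 0 hzero).const_mul _) ((hpow a ha).const_mul _),
    intervalIntegral.integral_const_mul, intervalIntegral.integral_const_mul, hbeta 0 hzero,
    hbeta a ha]
  have hΓ : Gamma (t + 1) ≠ 0 := (Gamma_pos_of_pos (by linarith)).ne'
  rw [zero_add, zero_add, Gamma_one, one_mul, div_self hΓ]

end BetaIntegral

section InversionFolding

variable {E : Type*} [NormedAddCommGroup E] [NormedSpace ℝ E] {f : ℝ → E} {c σ ε : ℝ}

/-- The pull-back of the density `f y dy` under the inversion `y = x⁻¹`. It turns integrals over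
neighbourhoods of infinity into integrals over neighbourhoods of `0`. -/
def invPullback (f : ℝ → E) (x : ℝ) : E :=
  (x ^ 2)⁻¹ • f x⁻¹

theorem image_inv_Ioo_zero (hc : 0 < c) : Inv.inv '' Ioo 0 c = Ioi c⁻¹ := by
  rw [image_inv_eq_inv, inv_Ioo_0_left hc]

theorem abs_deriv_inv_smul_eq_invPullback (f : ℝ → E) :
    (fun x : ℝ => |-(x ^ 2)⁻¹| • f x⁻¹) = invPullback f := by
  funext x
  rw [abs_neg, abs_of_nonneg (by positivity), invPullback]

theorem hasDerivWithinAt_inv_Ioo_zero {x : ℝ} (hx : x ∈ Ioo 0 c) :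
    HasDerivWithinAt Inv.inv (-(x ^ 2)⁻¹) (Ioo 0 c) x :=
  (hasDerivAt_inv hx.1.ne').hasDerivWithinAt

theorem integrableOn_Ioi_inv_iff (hc : 0 < c) :
    IntegrableOn f (Ioi c⁻¹) ↔ IntegrableOn (invPullback f) (Ioo 0 c) := by
  rw [← image_inv_Ioo_zero hc, ← abs_deriv_inv_smul_eq_invPullback,
    integrableOn_image_iff_integrableOn_abs_deriv_smul measurableSet_Ioo
      (fun _ => hasDerivWithinAt_inv_Ioo_zero) inv_injective.injOn]

theorem setIntegral_Ioi_inv (hc : 0 < c) (f : ℝ → E) :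
    ∫ y in Ioi c⁻¹, f y = ∫ x in (0 : ℝ)..c, invPullback f x := by
  rw [← image_inv_Ioo_zero hc, ← abs_deriv_inv_smul_eq_invPullback,
    integral_image_eq_integral_abs_deriv_smul measurableSet_Ioo
      (fun _ => hasDerivWithinAt_inv_Ioo_zero) inv_injective.injOn,
    intervalIntegral.integral_of_le hc.le, integral_Ioc_eq_integral_Ioo]

/-- Inversion maps `1 + ε` to `(1 + ε)⁻¹` rather than to `1 - ε`; the mismatch has length of order
`ε ^ 2`, which absorbs any singularity of order less than `2`. -/
theorem tendsto_integral_one_sub_inv_one_add {g : ℝ → E} (hσ0 : 0 ≤ σ) (hσ2 : σ < 2)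
    (hg : g =O[𝓝[<] 1] fun x => (1 - x) ^ (-σ)) :
    Tendsto (fun ε : ℝ => ∫ x in (1 - ε)..(1 + ε)⁻¹, g x) (𝓝[>] 0) (𝓝 0) := by
  obtain ⟨C, hC0, hC⟩ := hg.exists_pos
  obtain ⟨l, hl1, hl⟩ := (mem_nhdsLT_iff_exists_Ioo_subset).1 hC.bound
  have hlim : Tendsto (fun ε : ℝ => 4 * C * (ε / 2) ^ (2 - σ)) (𝓝[>] 0) (𝓝 0) := by
    have hcont : Continuous fun ε : ℝ => 4 * C * (ε / 2) ^ (2 - σ) :=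
      continuous_const.mul ((continuous_id.div_const 2).rpow_const fun _ => Or.inr (by linarith))
    have h0 := hcont.tendsto 0
    rw [zero_div, zero_rpow (by linarith), mul_zero] at h0
    exact h0.mono_left nhdsWithin_le_nhds
  refine squeeze_zero_norm' ?_ hlim
  filter_upwards [Ioo_mem_nhdsGT (lt_min (sub_pos.2 hl1) one_pos)] with ε hε
  obtain ⟨hε0, hε⟩ := hε
  obtain ⟨hεl, hε1⟩ := lt_min_iff.1 hε
  have hle : 1 - ε ≤ (1 + ε)⁻¹ := by
    rw [← one_div, le_div_iff₀ (by linarith)]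
    nlinarith
  have hinv : (1 + ε)⁻¹ ≤ 1 - ε / 2 := by
    rw [inv_le_iff_one_le_mul₀ (by linarith)]
    nlinarith
  have hbound : ∀ x ∈ uIoc (1 - ε) (1 + ε)⁻¹, ‖g x‖ ≤ C * (ε / 2) ^ (-σ) := by
    rw [uIoc_of_le hle]
    intro x hx
    have hx1 : ε / 2 ≤ 1 - x := by linarith [hx.2]
    refine (hl ⟨by linarith [hx.1], by linarith⟩).trans ?_
    rw [norm_of_nonneg (rpow_nonneg (by linarith) _)]
    gcongr ?_ * ?_
    exact rpow_le_rpow_of_nonpos (by linarith) hx1 (by linarith)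
  refine (intervalIntegral.norm_integral_le_of_norm_le_const hbound).trans ?_
  have hlength : |(1 + ε)⁻¹ - (1 - ε)| ≤ ε ^ 2 := by
    rw [abs_of_nonneg (sub_nonneg.2 hle), sub_le_iff_le_add, inv_le_iff_one_le_mul₀ (by linarith)]
    nlinarith [pow_pos hε0 3]
  calc C * (ε / 2) ^ (-σ) * |(1 + ε)⁻¹ - (1 - ε)| ≤ C * (ε / 2) ^ (-σ) * ε ^ 2 := by gcongr
    _ = 4 * C * (ε / 2) ^ (2 - σ) := by
        rw [sub_eq_neg_add, rpow_add (by linarith), rpow_two]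
        ring

theorem setOf_pos_and_lt_abs_sub_one (hε0 : 0 ≤ ε) :
    {y : ℝ | 0 < y ∧ ε < |y - 1|} = Ioo 0 (1 - ε) ∪ Ioi (1 + ε) := by
  ext y
  simp only [mem_ofPred_eq, lt_abs, mem_union, mem_Ioo, mem_Ioi]
  constructor
  · rintro ⟨hy, h | h⟩
    · exact Or.inr (by linarith)
    · exact Or.inl ⟨hy, by linarith⟩
  · rintro (⟨hy, h⟩ | h)
    · exact ⟨hy, Or.inr (by linarith)⟩
    · exact ⟨by linarith, Or.inl (by linarith)⟩

theorem setIntegral_pos_and_lt_abs_sub_one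
    (hf : ∀ c ∈ Ioo (0 : ℝ) 1, IntervalIntegrable f volume 0 c)
    (hf' : ∀ c ∈ Ioo (0 : ℝ) 1, IntervalIntegrable (invPullback f) volume 0 c)
    (hε : ε ∈ Ioo (0 : ℝ) 1) :
    ∫ y in {y : ℝ | 0 < y ∧ ε < |y - 1|}, f y =
      (∫ x in (0 : ℝ)..(1 - ε), f x + invPullback f x) +
        ∫ x in (1 - ε)..(1 + ε)⁻¹, invPullback f x := by
  obtain ⟨hε0, hε1⟩ := hε
  have hleft : 1 - ε ∈ Ioo (0 : ℝ) 1 := ⟨by linarith, by linarith⟩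
  have hright : (1 + ε)⁻¹ ∈ Ioo (0 : ℝ) 1 := ⟨by positivity, inv_lt_one_of_one_lt₀ (by linarith)⟩
  have hdisj : Disjoint (Ioo 0 (1 - ε)) (Ioi (1 + ε)) :=
    Set.disjoint_left.2 fun y hy hy' => by linarith [hy.2, mem_Ioi.1 hy']
  have hIoo := (intervalIntegrable_iff_integrableOn_Ioo_of_le hleft.1.le).1 (hf _ hleft)
  have hIoi : IntegrableOn f (Ioi (1 + ε)) := by
    rw [← inv_inv (1 + ε), integrableOn_Ioi_inv_iff hright.1,
      ← intervalIntegrable_iff_integrableOn_Ioo_of_le hright.1.le]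
    exact hf' _ hright
  have htail := setIntegral_Ioi_inv hright.1 f
  rw [inv_inv] at htail
  rw [setOf_pos_and_lt_abs_sub_one hε0.le,
    setIntegral_union hdisj measurableSet_Ioi hIoo hIoi, htail,
    ← integral_Ioc_eq_integral_Ioo, ← intervalIntegral.integral_of_le hleft.1.le,
    intervalIntegral.integral_add (hf _ hleft) (hf' _ hleft), add_assoc,
    intervalIntegral.integral_add_adjacent_intervals (hf' _ hleft)
      ((hf' _ hleft).symm.trans (hf' _ hright))]

theorem tendsto_setIntegral_pos_and_lt_abs_sub_one
    (hf : ∀ c ∈ Ioo (0 : ℝ) 1, IntervalIntegrable f volume 0 c)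
    (hf' : ∀ c ∈ Ioo (0 : ℝ) 1, IntervalIntegrable (invPullback f) volume 0 c)
    (hσ0 : 0 ≤ σ) (hσ2 : σ < 2) (hgap : invPullback f =O[𝓝[<] 1] fun x => (1 - x) ^ (-σ))
    (hsum : IntervalIntegrable (fun x => f x + invPullback f x) volume 0 1) :
    Tendsto (fun ε : ℝ => ∫ y in {y : ℝ | 0 < y ∧ ε < |y - 1|}, f y) (𝓝[>] 0)
      (𝓝 (∫ x in (0 : ℝ)..1, f x + invPullback f x)) := by
  have hprim : Tendsto (fun ε : ℝ => ∫ x in (0 : ℝ)..(1 - ε), f x + invPullback f x) (𝓝[>] 0)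
      (𝓝 (∫ x in (0 : ℝ)..1, f x + invPullback f x)) := by
    have hcont := intervalIntegral.continuousOn_primitive_interval' hsum left_mem_uIcc
    refine (hcont 1 right_mem_uIcc).tendsto.comp (tendsto_nhdsWithin_iff.2 ⟨?_, ?_⟩)
    · exact ((continuous_const.sub continuous_id).tendsto' 0 1 (sub_zero 1)).mono_left
        nhdsWithin_le_nhds
    · filter_upwards [Ioo_mem_nhdsGT one_pos] with ε hε
      rw [uIcc_of_le zero_le_one]
      exact ⟨by linarith [hε.2], by linarith [hε.1]⟩
  rw [← add_zero (∫ x in (0 : ℝ)..1, _)]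
  refine (hprim.add (tendsto_integral_one_sub_inv_one_add hσ0 hσ2 hgap)).congr' ?_
  filter_upwards [Ioo_mem_nhdsGT one_pos] with ε hε
  exact (setIntegral_pos_and_lt_abs_sub_one hf hf' hε).symm

end InversionFolding

section FoldedIntegral

variable {a b : ℝ}

/-- The value of `p.v. ∫₀^∞ (1 - y ^ a) / |1 - y| ^ (2 + a + b)` after `(1, ∞)` has been folded onto
`(0, 1)` by `y ↦ y⁻¹`. The exponent `2 + a + b` is the one for which the folded integrand factors,
and it makes the integral symmetric in `a` and `b`. -/
def foldedPowerIntegral (a b : ℝ) : ℝ :=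
  ∫ x in (0 : ℝ)..1, (1 - x ^ a) * (1 - x ^ b) * (1 - x) ^ (-(2 + a + b))

theorem neg_one_lt_min_zero_add_min_zero (ha : -1 < a) (hb : -1 < b) (hab : -1 < a + b) :
    -1 < min a 0 + min b 0 := by
  rcases min_cases a 0 with ⟨h, _⟩ | ⟨h, _⟩ <;> rcases min_cases b 0 with ⟨h', _⟩ | ⟨h', _⟩ <;>
    rw [h, h'] <;> linarith

theorem hasDerivAt_one_sub_rpow_mul_one_sub_rpow {x : ℝ} (hx : 0 < x) (a b : ℝ) :
    HasDerivAt (fun x : ℝ => (1 - x ^ a) * (1 - x ^ b))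
      (-(a * x ^ (a - 1)) * (1 - x ^ b) + (1 - x ^ a) * -(b * x ^ (b - 1))) x :=
  (hasDerivAt_one_sub_rpow_const hx a).fun_mul (hasDerivAt_one_sub_rpow_const hx b)

theorem intervalIntegrable_foldedPowerIntegrand (ha : -1 < a) (hb : -1 < b) (hab : -1 < a + b)
    (hab1 : a + b < 1) : IntervalIntegrable
      (fun x : ℝ => (1 - x ^ a) * (1 - x ^ b) * (1 - x) ^ (-(2 + a + b))) volume 0 1 :=
  intervalIntegrable_mul_one_sub_rpow (neg_one_lt_min_zero_add_min_zero ha hb hab)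
    (by linarith)
    (HasDerivAt.continuousOn fun _ hx => hasDerivAt_one_sub_rpow_mul_one_sub_rpow hx.1 a b)
    fun _ hx => abs_one_sub_rpow_mul_one_sub_rpow_le hx a b

theorem mul_foldedPowerIntegral (ha : -1 < a) (hb : -1 < b) (hab : -1 < a + b)
    (hab1 : a + b < 1) :
    (1 + a + b) * foldedPowerIntegral a b =
      b * (∫ x in (0 : ℝ)..1, (1 - x ^ a) * (1 - x) ^ (-(a + b) - 1)) +
        a * ∫ x in (0 : ℝ)..1, (1 - x ^ b) * (1 - x) ^ (-(a + b) - 1) := by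
  have hint (c d : ℝ) (hc : -1 < c) := (intervalIntegrable_one_sub_rpow_mul_one_sub_rpow
    (t := -(a + b) - 1) hc (by linarith)).const_mul d
  have hintegrand : EqOn
      (fun x : ℝ => -(b * ((1 - x ^ a) * (1 - x) ^ (-(a + b) - 1)) +
        a * ((1 - x ^ b) * (1 - x) ^ (-(a + b) - 1))))
      (fun x => ((1 + (-(a + b) - 1)) * ((1 - x ^ a) * (1 - x ^ b)) +
        x * (-(a * x ^ (a - 1)) * (1 - x ^ b) + (1 - x ^ a) * -(b * x ^ (b - 1)))) *
          (1 - x) ^ (-(a + b) - 1)) (uIoo 0 1) := by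
    rw [uIoo_of_le zero_le_one]
    intro x hx
    simp only [rpow_sub_one hx.1.ne']
    field_simp [hx.1.ne']
    ring
  have hparts := mul_integral_mul_one_sub_rpow_sub_one (t := -(a + b) - 1)
    (neg_one_lt_min_zero_add_min_zero ha hb hab)
    (by linarith)
    (fun x hx => hasDerivAt_one_sub_rpow_mul_one_sub_rpow hx.1 a b)
    (fun x hx => abs_one_sub_rpow_mul_one_sub_rpow_le hx a b)
    (((hint a b ha).add (hint b a hb)).neg.congr_uIoo hintegrand)
  rw [← intervalIntegral.integral_congr_uIoo hintegrand, intervalIntegral.integral_neg,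
    intervalIntegral.integral_add (hint a b ha) (hint b a hb),
    intervalIntegral.integral_const_mul, intervalIntegral.integral_const_mul,
    show -(a + b) - 1 - 1 = -(2 + a + b) by ring] at hparts
  rw [foldedPowerIntegral]
  linear_combination -hparts

theorem mul_inv_Gamma_one_sub (ha : -1 < a) :
    a * (Gamma (1 - a))⁻¹ = Gamma (a + 1) * sin (π * a) / π := by
  rcases eq_or_ne a 0 with rfl | ha0
  · simp
  have hsucc := Gamma_add_one ha0
  have hΓ : Gamma a ≠ 0 :=
    right_ne_zero_of_mul (hsucc ▸ (Gamma_pos_of_pos (by linarith : 0 < a + 1)).ne')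
  have hreflect : Gamma (1 - a) = π / sin (π * a) / Gamma a :=
    eq_div_of_mul_eq hΓ (by rw [mul_comm, Gamma_mul_Gamma_one_sub])
  rw [hreflect, hsucc, inv_div, div_div_eq_mul_div]
  ring

theorem cos_pi_mul_div_two_pos {c : ℝ} (hc : |c| < 1) : 0 < cos (π * c / 2) := by
  obtain ⟨hc0, hc1⟩ := abs_lt.1 hc
  exact cos_pos_of_mem_Ioo ⟨by nlinarith [pi_pos], by nlinarith [pi_pos]⟩

theorem neg_mul_mul_foldedPowerIntegral (ha : -1 < a) (hb : -1 < b) (hab : |a + b| < 1) :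
    -(a + b) * ((1 + a + b) * foldedPowerIntegral a b) =
      a + b - Gamma (1 - (a + b)) * Gamma (a + 1) * Gamma (b + 1) / π *
        (sin (π * a) + sin (π * b)) := by
  obtain ⟨hab0, hab1⟩ := abs_lt.1 hab
  have ht : -1 < -(a + b) := by linarith
  rw [mul_foldedPowerIntegral ha hb hab0 hab1, mul_add, mul_left_comm, mul_left_comm _ a,
    mul_integral_one_sub_rpow_mul_one_sub_rpow ha ht,
    mul_integral_one_sub_rpow_mul_one_sub_rpow hb ht,
    show a + -(a + b) + 1 = 1 - b by ring, show b + -(a + b) + 1 = 1 - a by ring,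
    show -(a + b) + 1 = 1 - (a + b) by ring]
  linear_combination -(Gamma (1 - (a + b)) * Gamma (a + 1)) * mul_inv_Gamma_one_sub hb -
    (Gamma (1 - (a + b)) * Gamma (b + 1)) * mul_inv_Gamma_one_sub ha

theorem one_add_mul_foldedPowerIntegral_of_add_ne_zero (ha : -1 < a) (hb : -1 < b)
    (hab : |a + b| < 1) (hne : a + b ≠ 0) :
    (1 + a + b) * foldedPowerIntegral a b =
      Gamma (a + 1) * Gamma (b + 1) * cos (π * (a - b) / 2) /
        (Gamma (a + b + 1) * cos (π * (a + b) / 2)) - 1 := by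
  have hreflect := mul_inv_Gamma_one_sub (abs_lt.1 hab).1
  have hsin_add : sin (π * a) + sin (π * b) =
      2 * sin (π * (a + b) / 2) * cos (π * (a - b) / 2) := by
    rw [sin_add_sin]
    ring_nf
  have hsin_two : sin (π * (a + b)) = 2 * sin (π * (a + b) / 2) * cos (π * (a + b) / 2) := by
    rw [← sin_two_mul]
    ring_nf
  have hΓ : Gamma (1 - (a + b)) ≠ 0 := (Gamma_pos_of_pos (by linarith [(abs_lt.1 hab).2])).ne'
  have hΓ' : Gamma (a + b + 1) ≠ 0 := (Gamma_pos_of_pos (by linarith [(abs_lt.1 hab).1])).ne'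
  have hcos := (cos_pi_mul_div_two_pos hab).ne'
  have hratio : (a + b) / (Gamma (a + b + 1) * cos (π * (a + b) / 2)) =
      Gamma (1 - (a + b)) / π * (2 * sin (π * (a + b) / 2)) := by
    rw [hsin_two] at hreflect
    rw [div_eq_iff (mul_ne_zero hΓ' hcos)]
    field_simp at hreflect ⊢
    linear_combination hreflect
  apply mul_left_cancel₀ (neg_ne_zero.2 hne)
  rw [neg_mul_mul_foldedPowerIntegral ha hb hab, hsin_add]
  linear_combination Gamma (a + 1) * Gamma (b + 1) * cos (π * (a - b) / 2) * hratio

theorem abs_foldedPowerIntegrand_le {x δ c : ℝ} (hx : x ∈ Ioo (0 : ℝ) 1) (a : ℝ)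
    (hc : |c - b| ≤ δ) :
    |(1 - x ^ a) * (1 - x ^ c) * (1 - x) ^ (-(2 + a + c))| ≤
      max |a| 1 * (max |b| 1 + δ) *
        (x ^ (min a 0 + min b 0 - δ) * (1 - x) ^ (-(a + b) - δ)) := by
  have hx1 : 0 < 1 - x := sub_pos.2 hx.2
  obtain ⟨hcb, hbc⟩ := abs_le.1 hc
  have hδ : 0 ≤ δ := (abs_nonneg _).trans hc
  have hmax : max |c| 1 ≤ max |b| 1 + δ :=
    max_le (by linarith [abs_sub_abs_le_abs_sub c b, le_max_left |b| 1])
      (by linarith [le_max_right |b| 1])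
  have hmin : min b 0 - δ ≤ min c 0 :=
    le_min (by linarith [min_le_left b 0]) (by linarith [min_le_right b 0])
  refine (abs_mul_one_sub_rpow_le hx.2 (abs_one_sub_rpow_mul_one_sub_rpow_le hx a c) _).trans ?_
  have hpow := rpow_le_rpow_of_exponent_ge hx.1 hx.2.le
    (by linarith : min a 0 + min b 0 - δ ≤ min a 0 + min c 0)
  have hpow' := rpow_le_rpow_of_exponent_ge hx1 (by linarith [hx.1])
    (by linarith : -(a + b) - δ ≤ 2 + -(2 + a + c))
  have hx0 := hx.1
  gcongr

theorem continuousAt_foldedPowerIntegral (ha : -1 < a) (hb : -1 < b) (hab : |a + b| < 1) :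
    ContinuousAt (foldedPowerIntegral a) b := by
  obtain ⟨hab0, hab1⟩ := abs_lt.1 hab
  obtain ⟨δ, hδ0, hδ⟩ := exists_between (lt_min (neg_lt_iff_pos_add.1
    (neg_one_lt_min_zero_add_min_zero ha hb hab0)) (sub_pos.2 hab1))
  obtain ⟨hδ1, hδ2⟩ := lt_min_iff.1 hδ
  have hdom := (intervalIntegrable_rpow_mul_one_sub_rpow
    (by linarith : -1 < min a 0 + min b 0 - δ) (by linarith : -1 < -(a + b) - δ)).const_mul
    (max |a| 1 * (max |b| 1 + δ))
  have hIoo : ∀ᵐ x : ℝ, x ∈ uIoc (0 : ℝ) 1 → x ∈ Ioo (0 : ℝ) 1 := by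
    filter_upwards [volume.ae_ne 1] with x hne hx
    rw [uIoc_of_le zero_le_one] at hx
    exact ⟨hx.1, hx.2.lt_of_ne hne⟩
  refine intervalIntegral.continuousAt_of_dominated_interval
    (.of_forall fun c => (by fun_prop : Measurable _).aestronglyMeasurable) ?_ hdom ?_
  · filter_upwards [Metric.closedBall_mem_nhds b hδ0] with c hc
    filter_upwards [hIoo] with x hx hx01
    exact abs_foldedPowerIntegrand_le (hx hx01) a hc
  · filter_upwards [hIoo] with x hx hx01
    have hx0 := (hx hx01).1.ne'
    have hx1 := (sub_pos.2 (hx hx01).2).ne'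
    have hexp : Continuous fun c : ℝ => -(2 + a + c) := by fun_prop
    exact ((continuous_const.mul (continuous_const.sub (continuous_const_rpow hx0))).mul
      ((continuous_const_rpow hx1).comp hexp)).continuousAt

theorem continuousAt_Gamma_of_pos {x : ℝ} (hx : 0 < x) : ContinuousAt Gamma x :=
  (differentiableOn_Gamma_Ioi.differentiableAt (Ioi_mem_nhds hx)).continuousAt

theorem one_add_mul_foldedPowerIntegral (ha : -1 < a) (hb : -1 < b) (hab : |a + b| < 1) :
    (1 + a + b) * foldedPowerIntegral a b =
      Gamma (a + 1) * Gamma (b + 1) * cos (π * (a - b) / 2) /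
        (Gamma (a + b + 1) * cos (π * (a + b) / 2)) - 1 := by
  rcases ne_or_eq (a + b) 0 with hne | hzero
  · exact one_add_mul_foldedPowerIntegral_of_add_ne_zero ha hb hab hne
  have hleft : ContinuousAt (fun c => (1 + a + c) * foldedPowerIntegral a c) b :=
    (by fun_prop : ContinuousAt (fun c : ℝ => 1 + a + c) b).mul
      (continuousAt_foldedPowerIntegral ha hb hab)
  have hright : ContinuousAt (fun c => Gamma (a + 1) * Gamma (c + 1) * cos (π * (a - c) / 2) /
      (Gamma (a + c + 1) * cos (π * (a + c) / 2)) - 1) b := by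
    have hΓb : 0 < b + 1 := by linarith
    have hΓab : 0 < a + b + 1 := by linarith [(abs_lt.1 hab).1]
    have hden := mul_pos (Gamma_pos_of_pos hΓab) (cos_pi_mul_div_two_pos hab)
    have hΓ₁ : ContinuousAt (fun c => Gamma (c + 1)) b :=
      ContinuousAt.comp (g := Gamma) (continuousAt_Gamma_of_pos hΓb) (by fun_prop)
    have hΓ₂ : ContinuousAt (fun c => Gamma (a + c + 1)) b :=
      ContinuousAt.comp (g := Gamma) (continuousAt_Gamma_of_pos hΓab) (by fun_prop)
    exact (((continuousAt_const.mul hΓ₁).mul (by fun_prop)).div (hΓ₂.mul (by fun_prop))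
      hden.ne').sub continuousAt_const
  have hlt : ∀ᶠ c in 𝓝[≠] b, -1 < c := nhdsWithin_le_nhds (Ioi_mem_nhds hb)
  have habs : ∀ᶠ c in 𝓝[≠] b, |a + c| < 1 := nhdsWithin_le_nhds <|
    (by fun_prop : ContinuousAt (fun c => |a + c|) b).eventually_lt_const hab
  refine ((hleft.eventuallyEq_nhds_iff_eventuallyEq_nhdsNE hright).1 ?_).eq_of_nhds
  filter_upwards [hlt, habs, self_mem_nhdsWithin] with c hc hac hcb
  exact one_add_mul_foldedPowerIntegral_of_add_ne_zero ha hc hac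
    fun h => hcb (add_left_cancel (h.trans hzero.symm))

end FoldedIntegral

section PowerKernel

variable {a b c p q : ℝ}

theorem intervalIntegrable_rpow_sub_rpow_mul_one_sub_rpow (hp : -1 < p) (hq : -1 < q) (t : ℝ)
    (hc : c ∈ Ioo (0 : ℝ) 1) :
    IntervalIntegrable (fun x : ℝ => (x ^ p - x ^ q) * (1 - x) ^ t) volume 0 c := by
  refine ((intervalIntegral.intervalIntegrable_rpow' hp).sub
    (intervalIntegral.intervalIntegrable_rpow' hq)).mul_continuousOn ?_
  rw [uIcc_of_le hc.1.le]
  exact (continuousOn_one_sub_rpow t).mono fun x hx => hx.2.trans_lt hc.2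

theorem isBigO_rpow_sub_rpow_mul_one_sub_rpow (p q t : ℝ) :
    (fun x : ℝ => (x ^ p - x ^ q) * (1 - x) ^ t) =O[𝓝[<] 1] fun x => (1 - x) ^ (1 + t) := by
  have hdiff : DifferentiableAt ℝ (fun x : ℝ => x ^ p - x ^ q) 1 :=
    (differentiableAt_rpow_const_of_ne p one_ne_zero).sub
      (differentiableAt_rpow_const_of_ne q one_ne_zero)
  have hO := (hdiff.isBigO_sub.neg_right.mono nhdsWithin_le_nhds).mul
    (Asymptotics.isBigO_refl (fun x : ℝ => (1 - x) ^ t) (𝓝[<] 1))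
  refine hO.congr' (.of_forall fun x => ?_) ?_
  · simp only [one_rpow, sub_self, sub_zero]
  · filter_upwards [self_mem_nhdsWithin] with x hx
    rw [rpow_add (sub_pos.2 hx), rpow_one, neg_sub]

/-- The integrand of the regional fractional Laplacian of `y ↦ y ^ a` at the point `1`, with the
exponent `r` in place of `1 + 2s`. -/
def powerKernel (a r y : ℝ) : ℝ :=
  (1 - y ^ a) / |1 - y| ^ r

theorem eqOn_powerKernel (a r : ℝ) :
    EqOn (powerKernel a r) (fun x => (x ^ (0 : ℝ) - x ^ a) * (1 - x) ^ (-r)) (Ioo 0 1) := by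
  intro x hx
  have hx1 : 0 < 1 - x := sub_pos.2 hx.2
  simp only [powerKernel]
  rw [abs_of_pos hx1, rpow_neg hx1.le, rpow_zero, div_eq_mul_inv]

theorem eqOn_invPullback_powerKernel (a b : ℝ) :
    EqOn (invPullback (powerKernel a (2 + a + b)))
      (fun x => (x ^ (a + b) - x ^ b) * (1 - x) ^ (-(2 + a + b))) (Ioo 0 1) := by
  intro x hx
  have hx0 : 0 < x := hx.1
  have hx1 : 0 < 1 - x := sub_pos.2 hx.2
  have habs : |1 - x⁻¹| = (1 - x) / x := by
    rw [abs_sub_comm, abs_of_pos (sub_pos.2 ((one_lt_inv₀ hx0).2 hx.2)), sub_div, one_div,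
      div_self hx0.ne']
  have hxa := (rpow_pos_of_pos hx0 a).ne'
  have hxt := (rpow_pos_of_pos hx1 (2 + a + b)).ne'
  simp only [invPullback, powerKernel]
  rw [habs, div_rpow hx1.le hx0.le, inv_rpow hx0.le, rpow_neg hx1.le, rpow_add hx0 (2 + a),
    rpow_add hx0 2, rpow_two, rpow_add hx0 a, smul_eq_mul]
  field_simp [hxa, hxt]

theorem tendsto_setIntegral_powerKernel (ha : -1 < a) (hb : -1 < b) (hab : |a + b| < 1) :
    Tendsto (fun ε : ℝ => ∫ y in {y : ℝ | 0 < y ∧ ε < |y - 1|}, powerKernel a (2 + a + b) y)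
      (𝓝[>] 0) (𝓝 (foldedPowerIntegral a b)) := by
  obtain ⟨hab0, hab1⟩ := abs_lt.1 hab
  have hker := eqOn_powerKernel a (2 + a + b)
  have hinv := eqOn_invPullback_powerKernel a b
  have hsum : EqOn (fun x => (1 - x ^ a) * (1 - x ^ b) * (1 - x) ^ (-(2 + a + b)))
      (fun x => powerKernel a (2 + a + b) x + invPullback (powerKernel a (2 + a + b)) x)
      (uIoo 0 1) := by
    rw [uIoo_of_le zero_le_one]
    intro x hx
    simp only [hker hx, hinv hx, rpow_zero, rpow_add hx.1 a]
    ring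
  have hsub {c : ℝ} (hc : c ∈ Ioo (0 : ℝ) 1) : uIoo 0 c ⊆ Ioo 0 1 := by
    rw [uIoo_of_le hc.1.le]
    exact Ioo_subset_Ioo_right hc.2.le
  rw [foldedPowerIntegral, intervalIntegral.integral_congr_uIoo hsum]
  refine tendsto_setIntegral_pos_and_lt_abs_sub_one (σ := 1 + a + b) (fun c hc => ?_)
    (fun c hc => ?_) (by linarith) (by linarith) ?_
    ((intervalIntegrable_foldedPowerIntegrand ha hb hab0 hab1).congr_uIoo hsum)
  · exact (intervalIntegrable_rpow_sub_rpow_mul_one_sub_rpow (by norm_num) ha _ hc).congr_uIoo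
      (hker.symm.mono (hsub hc))
  · exact (intervalIntegrable_rpow_sub_rpow_mul_one_sub_rpow hab0 hb _ hc).congr_uIoo
      (hinv.symm.mono (hsub hc))
  · refine (isBigO_rpow_sub_rpow_mul_one_sub_rpow (a + b) b (-(2 + a + b))).congr' ?_
      (.of_forall fun x => by ring_nf)
    filter_upwards [Ioo_mem_nhdsLT one_pos] with x hx using (hinv hx).symm

theorem foldedPowerIntegral_eq_zero_iff {s β : ℝ} (hs0 : 0 < s) (hs1 : s < 1) (hβ0 : -1 < β)
    (hβ2 : β < 2 * s) :
    foldedPowerIntegral β (2 * s - 1 - β) = 0 ↔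
      Gamma (β + 1) * Gamma (2 * s - β) * sin (π * (β - s)) =
        -(Gamma (2 * s) * sin (π * s)) := by
  have hvalue := one_add_mul_foldedPowerIntegral hβ0 (by linarith : -1 < 2 * s - 1 - β)
    (abs_lt.2 ⟨by linarith, by linarith⟩)
  have hcos_sub : cos (π * (β - (2 * s - 1 - β)) / 2) = -sin (π * (β - s)) := by
    rw [← cos_add_pi_div_two]
    ring_nf
  have hcos_add : cos (π * (2 * s - 1) / 2) = sin (π * s) := by
    rw [← cos_sub_pi_div_two]
    ring_nf
  rw [add_assoc 1, show β + (2 * s - 1 - β) = 2 * s - 1 by ring, add_sub_cancel, hcos_sub, hcos_add,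
    sub_add_cancel, show 2 * s - 1 - β + 1 = 2 * s - β by ring] at hvalue
  have hpos : 0 < Gamma (2 * s) * sin (π * s) :=
    mul_pos (Gamma_pos_of_pos (by linarith))
      (sin_pos_of_pos_of_lt_pi (by positivity) (by nlinarith [pi_pos]))
  have hs2 : 2 * s ≠ 0 := by positivity
  rw [← mul_eq_zero_iff_left hs2, hvalue, sub_eq_zero, div_eq_one_iff_eq hpos.ne', mul_neg,
    neg_eq_iff_eq_neg]

end PowerKernel

theorem regional_power_pv_eq_zero_iff_general (s β : ℝ) (hs0 : 0 < s) (hs1 : s < 1) (hβ0 : -1 < β)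
    (hβ2 : β < 2 * s) :
    Tendsto (fun ε : ℝ =>
        ∫ y in {y : ℝ | 0 < y ∧ ε < |y - 1|}, (1 - y ^ β) / |1 - y| ^ (1 + 2 * s))
      (𝓝[>] 0) (𝓝 0) ↔
    Gamma (β + 1) * Gamma (2 * s - β) * sin (π * (β - s)) = -(Gamma (2 * s) * sin (π * s)) := by
  have hpv := tendsto_setIntegral_powerKernel hβ0 (by linarith : -1 < 2 * s - 1 - β)
    (abs_lt.2 ⟨by linarith, by linarith⟩)
  rw [show 2 + β + (2 * s - 1 - β) = 1 + 2 * s by ring] at hpv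
  rw [← foldedPowerIntegral_eq_zero_iff hs0 hs1 hβ0 hβ2]
  exact ⟨tendsto_nhds_unique hpv, fun h => h ▸ hpv⟩

/-- **Lemma 2.5, characterization of the admissible homogeneities.**
For `s ∈ (0,1)` and `β ∈ (0,2s)` with `β-s, β-2s ∉ ℤ`, the principal value
`p.v.∫₀^∞ (1-y^β)/|1-y|^{1+2s} dy` (the regional fractional Laplacian of `x ↦ x^β` on
`ℝ₊` at `x = 1`, divided by `c_{1,s}`) vanishes if and only if `β` solves equation (E):
`Γ(β+1)Γ(2s-β)sin(π(β-s)) = -Γ(2s)sin(πs)`. -/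
theorem regional_power_pv_eq_zero_iff
    (s β : ℝ) (hs0 : 0 < s) (hs1 : s < 1) (hβ0 : 0 < β) (hβ2 : β < 2*s)
    (h1 : ∀ k : ℤ, β - s ≠ (k : ℝ)) (h2 : ∀ k : ℤ, β - 2*s ≠ (k : ℝ)) :
    Tendsto (fun ε : ℝ =>
        ∫ y in {y : ℝ | 0 < y ∧ ε < |y - 1|}, (1 - y ^ β) / |1 - y| ^ (1 + 2*s))
      (nhdsWithin 0 (Set.Ioi 0)) (nhds 0)
    ↔ Real.Gamma (β+1) * Real.Gamma (2*s-β) * Real.sin (π*(β-s))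
        = -(Real.Gamma (2*s) * Real.sin (π*s)) :=
  regional_power_pv_eq_zero_iff_general s β hs0 hs1 (by linarith) hβ2
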